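/- Over a field of characteristic 0, if f, g are nonzero binary forms of coprime degrees m and n with {f,g} = 0, then there is a linear form ℓ (degree gcd(m,n) = 1) with f = c₁·ℓ^m and g = c₂·ℓ^n for nonzero scalars c₁, c₂. -/

import Mathlib

open MvPolynomial

/-- The first transvectant of two binary forms. -/
noncomputable def transvectant {k : Type*} [CommRing k]
    (f g : MvPolynomial (Fin 2) k) : MvPolynomial (Fin 2) k :=
  pderiv 0 f * pderiv 1 g - pderiv 1 f * pderiv 0 g

/-! Vanishing of the Jacobian minors together with Euler's identity makes the logarithmic
derivatives of `f ^ b` and `g ^ a` agree when `f` and `g` have degrees `d * a` and `d * b`. Dividing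
out a common factor leaves coprime polynomials each dividing its own partial derivatives; these are
units, so `f ^ b` and `g ^ a` agree up to a unit. For coprime `a` and `b`, a Bézout relation and
integral closedness of the polynomial ring yield a common root `ℓ`, which is homogeneous because it
is an eigenvector of the Euler derivation whenever one of its powers is. -/

theorem exists_associated_pow_of_associated_pow {R : Type*} [CommRing R] [IsDomain R]
    [IsIntegrallyClosed R] {a b : ℕ} (hab : a.Coprime b) {x y : R}
    (h : Associated (x ^ b) (y ^ a)) :
    ∃ z, Associated x (z ^ a) ∧ Associated y (z ^ b) := by
  obtain rfl | rfl | hb : b = 0 ∨ b = 1 ∨ 1 < b := by lia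
  · obtain rfl : a = 1 := by simpa using hab
    exact ⟨x, by simp, by simpa using h.symm⟩
  · exact ⟨y, by simpa using h, by simp⟩
  have ha : a ≠ 0 := by
    rintro rfl
    exact hb.ne' (by simpa using hab)
  rcases eq_or_ne y 0 with rfl | hy
  · obtain rfl : x = 0 := by
      rw [zero_pow ha, associated_zero_iff_eq_zero] at h
      exact eq_zero_of_pow_eq_zero h
    exact ⟨0, by simp [ha], by simp [(zero_lt_one.trans hb).ne']⟩
  -- With `a * u = b * v + 1`, the common root is the quotient of `x ^ u` by `y ^ v`.
  obtain ⟨u, -, hu⟩ := Nat.exists_mul_mod_eq_one_of_coprime hab hb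
  set v := a * u / b
  have huv : a * u = b * v + 1 := by rw [← hu, Nat.div_add_mod]
  have hpow : Associated ((y ^ v) ^ a * x) ((x ^ u) ^ a) := by
    have hx : (x ^ u) ^ a = (x ^ b) ^ v * x := by
      rw [← pow_mul, mul_comm u, huv, pow_succ, pow_mul]
    rw [hx, pow_right_comm]
    exact h.symm.pow_pow.mul_right x
  obtain ⟨z, hz⟩ : y ^ v ∣ x ^ u :=
    (IsIntegrallyClosed.pow_dvd_pow_iff ha).1 ((dvd_mul_right _ _).trans hpow.dvd)
  have hxz : Associated x (z ^ a) := by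
    rw [hz, mul_pow] at hpow
    exact hpow.of_mul_left (Associated.refl _) (pow_ne_zero _ (pow_ne_zero _ hy))
  refine ⟨z, hxz, (Associated.pow_iff ha).1 ?_⟩
  rw [pow_right_comm]
  exact h.symm.trans hxz.pow_pow

section Derivation

theorem derivation_sum_apply {ι R A M : Type*} [CommSemiring R] [CommSemiring A] [AddCommMonoid M]
    [Algebra R A] [Module A M] [Module R M] (s : Finset ι) (D : ι → Derivation R A M) (a : A) :
    (∑ i ∈ s, D i) a = ∑ i ∈ s, D i a :=
  map_sum ((Pi.evalAddMonoidHom _ a).comp (Derivation.coeFnAddMonoidHom (R := R))) D s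

theorem mul_derivation_pow {R A : Type*} [CommSemiring R] [CommSemiring A] [Algebra R A]
    (D : Derivation R A A) (f : A) (n : ℕ) : f * D (f ^ n) = f ^ n * (n • D f) := by
  cases n with
  | zero => simp
  | succ n => simp only [D.leibniz_pow, Nat.add_sub_cancel, smul_eq_mul, nsmul_eq_mul]; ring

theorem pow_mul_derivation_pow_comm {R A : Type*} [CommSemiring R] [CommSemiring A] [Algebra R A]
    [IsCancelMulZero A] (D : Derivation R A A) {f g : A} {a b : ℕ} (hf : f ≠ 0) (hg : g ≠ 0)
    (h : b • (g * D f) = a • (f * D g)) :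
    g ^ a * D (f ^ b) = f ^ b * D (g ^ a) := by
  apply mul_left_cancel₀ (mul_ne_zero hf hg)
  calc f * g * (g ^ a * D (f ^ b)) = g * g ^ a * (f * D (f ^ b)) := by ring
    _ = f ^ b * g ^ a * (b • (g * D f)) := by
      rw [mul_derivation_pow, nsmul_eq_mul, nsmul_eq_mul]; ring
    _ = f * f ^ b * (g * D (g ^ a)) := by
      rw [h, mul_derivation_pow, nsmul_eq_mul, nsmul_eq_mul]; ring
    _ = f * g * (f ^ b * D (g ^ a)) := by ring

end Derivation

section CommSemiring

variable {σ R : Type*} [CommSemiring R]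

theorem derivation_eq_sum_pderiv (D : Derivation R (MvPolynomial σ R) (MvPolynomial σ R))
    {f : MvPolynomial σ R} {s : Finset σ} (hs : f.vars ⊆ s) :
    D f = ∑ i ∈ s, D (X i) * pderiv i f := by
  classical
  suffices hD : D f = (∑ i ∈ s, D (X i) • pderiv i) f by
    simpa only [derivation_sum_apply, Derivation.smul_apply, smul_eq_mul] using hD
  refine derivation_eq_of_forall_mem_vars fun j hj ↦ ?_
  simp [derivation_sum_apply, Pi.single_apply, hs hj]

theorem derivation_mul_derivation_comm {f g : MvPolynomial σ R}
    (h : ∀ i j, pderiv i f * pderiv j g = pderiv j f * pderiv i g)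
    (D E : Derivation R (MvPolynomial σ R) (MvPolynomial σ R)) :
    D f * E g = E f * D g := by
  classical
  have hf : f.vars ⊆ f.vars ∪ g.vars := Finset.subset_union_left
  have hg : g.vars ⊆ f.vars ∪ g.vars := Finset.subset_union_right
  rw [derivation_eq_sum_pderiv D hf, derivation_eq_sum_pderiv E hg, derivation_eq_sum_pderiv E hf,
    derivation_eq_sum_pderiv D hg, Finset.sum_mul_sum, Finset.sum_mul_sum, Finset.sum_comm]
  refine Finset.sum_congr rfl fun j _ ↦ Finset.sum_congr rfl fun i _ ↦ ?_
  rw [mul_mul_mul_comm, h, mul_comm (D _), mul_mul_mul_comm]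

theorem derivation_eq_zero_of_isHomogeneous_zero {f : MvPolynomial σ R} (hf : f.IsHomogeneous 0)
    (D : Derivation R (MvPolynomial σ R) (MvPolynomial σ R)) : D f = 0 := by
  rw [totalDegree_eq_zero_iff_eq_C.1 ((totalDegree_zero_iff_isHomogeneous σ).2 hf), derivation_C]

theorem degreeOf_pderiv_lt {i : σ} {f : MvPolynomial σ R} (h : pderiv i f ≠ 0) :
    degreeOf i (pderiv i f) < degreeOf i f := by
  have hlt (m) (hm : m ∈ (pderiv i f).support) : m i < degreeOf i f := by
    rw [mem_support_iff, coeff_pderiv] at hm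
    simpa using monomial_le_degreeOf i (mem_support_iff.2 (left_ne_zero_of_mul hm))
  obtain ⟨m, hm⟩ := support_nonempty.2 h
  exact (degreeOf_lt_iff (Nat.zero_lt_of_lt (hlt m hm))).2 hlt

theorem pderiv_eq_zero_of_dvd [NoZeroDivisors R] {i : σ} {f : MvPolynomial σ R}
    (h : f ∣ pderiv i f) : pderiv i f = 0 := by
  by_contra h0
  obtain ⟨q, hq⟩ := h
  have hlt := degreeOf_pderiv_lt h0
  rw [hq] at h0 hlt
  rw [degreeOf_mul_eq (left_ne_zero_of_mul h0) (right_ne_zero_of_mul h0)] at hlt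
  lia

/-- The Euler derivation `∑ i, X i * ∂/∂X i`, which detects homogeneity. It is given by its values
on the variables so that there may be infinitely many of them. -/
noncomputable def eulerDerivation (σ R : Type*) [CommSemiring R] :
    Derivation R (MvPolynomial σ R) (MvPolynomial σ R) :=
  mkDerivation R X

theorem eulerDerivation_monomial (m : σ →₀ ℕ) (r : R) :
    eulerDerivation σ R (monomial m r) = m.degree • monomial m r := by
  classical
  have hs : (monomial m r).vars ⊆ m.support := by
    rcases eq_or_ne r 0 with rfl | hr
    · simp
    · rw [vars_monomial hr]
  rw [derivation_eq_sum_pderiv _ hs, Finsupp.degree_apply, Finset.sum_smul]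
  simp only [eulerDerivation, mkDerivation_X, X_mul_pderiv_monomial]

theorem coeff_eulerDerivation (f : MvPolynomial σ R) (m : σ →₀ ℕ) :
    coeff m (eulerDerivation σ R f) = m.degree * coeff m f := by
  classical
  induction f using MvPolynomial.induction_on' with
  | add p q hp hq => simp only [map_add, coeff_add, hp, hq, mul_add]
  | monomial n r =>
    rw [eulerDerivation_monomial, coeff_smul, coeff_monomial, nsmul_eq_mul]
    split_ifs with h
    · rw [h]
    · simp

theorem eulerDerivation_eq_nsmul {f : MvPolynomial σ R} {d : ℕ} (hf : f.IsHomogeneous d) :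
    eulerDerivation σ R f = d • f := by
  ext m
  rw [coeff_eulerDerivation, coeff_smul, nsmul_eq_mul]
  by_cases hm : m.degree = d
  · rw [hm]
  · rw [hf.coeff_eq_zero hm, mul_zero, mul_zero]

theorem isHomogeneous_of_eulerDerivation_eq_nsmul [IsCancelMulZero R] [CharZero R]
    {f : MvPolynomial σ R} {d : ℕ} (h : eulerDerivation σ R f = d • f) : f.IsHomogeneous d := by
  intro m hm
  have hc := congrArg (coeff m) h
  rw [coeff_eulerDerivation, coeff_smul, nsmul_eq_mul] at hc
  have hdeg : m.degree = d := Nat.cast_injective (mul_right_cancel₀ hm hc)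
  rwa [Finsupp.degree_eq_weight_one] at hdeg

theorem eq_C_of_pderiv_eq_zero [IsCancelMulZero R] [CharZero R]
    {f : MvPolynomial σ R} (h : ∀ i, pderiv i f = 0) : f = C (coeff 0 f) := by
  rw [← totalDegree_eq_zero_iff_eq_C, totalDegree_zero_iff_isHomogeneous]
  apply isHomogeneous_of_eulerDerivation_eq_nsmul
  rw [derivation_eq_sum_pderiv _ subset_rfl, zero_smul]
  exact Finset.sum_eq_zero fun i _ ↦ by rw [h i, mul_zero]

theorem nsmul_mul_derivation_comm {f g : MvPolynomial σ R} {m n : ℕ}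
    (hf : f.IsHomogeneous m) (hg : g.IsHomogeneous n)
    (h : ∀ i j, pderiv i f * pderiv j g = pderiv j f * pderiv i g)
    (D : Derivation R (MvPolynomial σ R) (MvPolynomial σ R)) :
    n • (g * D f) = m • (f * D g) := by
  have hE := derivation_mul_derivation_comm h D (eulerDerivation σ R)
  rwa [eulerDerivation_eq_nsmul hf, eulerDerivation_eq_nsmul hg, mul_comm, smul_mul_assoc,
    smul_mul_assoc] at hE

end CommSemiring

section CharZero

variable {σ R : Type*} [CommRing R] [IsDomain R] [CharZero R]

theorem isHomogeneous_of_pow {f : MvPolynomial σ R} {d n : ℕ} (hn : n ≠ 0)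
    (h : (f ^ n).IsHomogeneous (d * n)) : f.IsHomogeneous d := by
  rcases eq_or_ne f 0 with rfl | hf
  · exact isHomogeneous_zero σ R d
  apply isHomogeneous_of_eulerDerivation_eq_nsmul
  have hE := mul_derivation_pow (eulerDerivation σ R) f n
  rw [eulerDerivation_eq_nsmul h] at hE
  have hn' : (n : MvPolynomial σ R) ≠ 0 := Nat.cast_ne_zero.2 hn
  apply mul_left_cancel₀ (mul_ne_zero (pow_ne_zero n hf) hn')
  simp only [nsmul_eq_mul, Nat.cast_mul] at hE ⊢
  linear_combination -hE

theorem nsmul_mul_derivation_comm_of_isHomogeneous_mul {f g : MvPolynomial σ R} {d a b : ℕ}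
    (hf : f.IsHomogeneous (d * a)) (hg : g.IsHomogeneous (d * b))
    (h : ∀ i j, pderiv i f * pderiv j g = pderiv j f * pderiv i g)
    (D : Derivation R (MvPolynomial σ R) (MvPolynomial σ R)) :
    b • (g * D f) = a • (f * D g) := by
  rcases eq_or_ne d 0 with rfl | hd
  · rw [zero_mul] at hf hg
    rw [derivation_eq_zero_of_isHomogeneous_zero hf, derivation_eq_zero_of_isHomogeneous_zero hg,
      mul_zero, mul_zero, smul_zero, smul_zero]
  · apply nsmul_right_injective hd
    simpa only [mul_smul] using nsmul_mul_derivation_comm hf hg h D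

end CharZero

section Field

variable {σ K : Type*} [Field K]

theorem exists_eq_smul_of_associated {f g : MvPolynomial σ K} (h : Associated f g) :
    ∃ c : K, c ≠ 0 ∧ f = c • g := by
  obtain ⟨u, rfl⟩ := h.symm
  obtain ⟨c, hc, hu⟩ := isUnit_iff_eq_C_of_isReduced.1 u.isUnit
  exact ⟨c, hc.ne_zero, by rw [hu, mul_comm, C_mul']⟩

variable [CharZero K]

theorem isUnit_of_dvd_pderiv {f : MvPolynomial σ K} (hf : f ≠ 0) (h : ∀ i, f ∣ pderiv i f) :
    IsUnit f := by
  obtain ⟨c, rfl⟩ : ∃ c, f = C c :=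
    ⟨_, eq_C_of_pderiv_eq_zero fun i ↦ pderiv_eq_zero_of_dvd (h i)⟩
  exact (isUnit_iff_ne_zero.2 (C_ne_zero.1 hf)).map C

theorem associated_of_mul_pderiv_comm {f g : MvPolynomial σ K} (hf : f ≠ 0) (hg : g ≠ 0)
    (h : ∀ i, g * pderiv i f = f * pderiv i g) : Associated f g := by
  obtain ⟨p, q, r, hpq, rfl, rfl⟩ := UniqueFactorizationMonoid.exists_reduced_factors f hf g
  have hr : r ≠ 0 := left_ne_zero_of_mul hf
  have hcomm (i) : q * pderiv i p = p * pderiv i q := by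
    apply mul_left_cancel₀ (mul_ne_zero hr hr)
    have hi := h i
    simp only [pderiv_mul] at hi
    linear_combination hi
  have hp : IsUnit p := isUnit_of_dvd_pderiv (right_ne_zero_of_mul hf) fun i ↦
    hpq.dvd_of_dvd_mul_left ⟨_, hcomm i⟩
  have hq : IsUnit q := isUnit_of_dvd_pderiv (right_ne_zero_of_mul hg) fun i ↦
    hpq.symm.dvd_of_dvd_mul_left ⟨_, (hcomm i).symm⟩
  exact ((associated_one_iff_isUnit.2 hp).trans
    (associated_one_iff_isUnit.2 hq).symm).mul_left r

theorem associated_pow_pow_of_pderiv_mul_pderiv_comm {f g : MvPolynomial σ K} {d a b : ℕ}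
    (hf0 : f ≠ 0) (hg0 : g ≠ 0) (hf : f.IsHomogeneous (d * a)) (hg : g.IsHomogeneous (d * b))
    (h : ∀ i j, pderiv i f * pderiv j g = pderiv j f * pderiv i g) :
    Associated (f ^ b) (g ^ a) :=
  associated_of_mul_pderiv_comm (pow_ne_zero b hf0) (pow_ne_zero a hg0) fun i ↦
    pow_mul_derivation_pow_comm (pderiv i) hf0 hg0
      (nsmul_mul_derivation_comm_of_isHomogeneous_mul hf hg h _)

theorem isHomogeneous_of_associated_pow {f ℓ : MvPolynomial σ K} {d n : ℕ} (hn : n ≠ 0)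
    (hf : f.IsHomogeneous (d * n)) (h : Associated f (ℓ ^ n)) : ℓ.IsHomogeneous d := by
  obtain ⟨c, -, hc⟩ := exists_eq_smul_of_associated h.symm
  apply isHomogeneous_of_pow hn
  rw [hc]
  exact (homogeneousSubmodule σ K _).smul_mem c hf

theorem transvectant_eq_zero_coprime_degrees_general {d a b : ℕ} (hab : a.Coprime b)
    {f g : MvPolynomial σ K} (hf : f.IsHomogeneous (d * a)) (hg : g.IsHomogeneous (d * b))
    (hf0 : f ≠ 0) (hg0 : g ≠ 0)
    (h : ∀ i j, pderiv i f * pderiv j g = pderiv j f * pderiv i g) :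
    ∃ (ℓ : MvPolynomial σ K) (c₁ c₂ : K),
      ℓ.IsHomogeneous d ∧ c₁ ≠ 0 ∧ c₂ ≠ 0 ∧ f = c₁ • ℓ ^ a ∧ g = c₂ • ℓ ^ b := by
  obtain ⟨ℓ, hfℓ, hgℓ⟩ := exists_associated_pow_of_associated_pow hab
    (associated_pow_pow_of_pderiv_mul_pderiv_comm hf0 hg0 hf hg h)
  obtain ⟨c₁, hc₁, hf_eq⟩ := exists_eq_smul_of_associated hfℓ
  obtain ⟨c₂, hc₂, hg_eq⟩ := exists_eq_smul_of_associated hgℓ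
  refine ⟨ℓ, c₁, c₂, ?_, hc₁, hc₂, hf_eq, hg_eq⟩
  rcases eq_or_ne a 0 with rfl | ha
  · obtain rfl : b = 1 := by simpa using hab
    exact isHomogeneous_of_associated_pow one_ne_zero hg hgℓ
  · exact isHomogeneous_of_associated_pow ha hf hfℓ

end Field

/-- Over an algebraically closed field of characteristic zero, if `f`, `g` are
nonzero binary forms of coprime degrees `m` and `n` with `{f,g} = 0`, then there
is a linear form `ℓ` with `f = c₁ • ℓ^m` and `g = c₂ • ℓ^n` for nonzero scalars
`c₁`, `c₂`. -/
theorem transvectant_eq_zero_coprime_degrees {K : Type*} [Field K] [IsAlgClosed K]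
    [CharZero K] (m n : ℕ) (hmn : Nat.Coprime m n)
    (f g : MvPolynomial (Fin 2) K)
    (hf : f.IsHomogeneous m) (hg : g.IsHomogeneous n)
    (hf0 : f ≠ 0) (hg0 : g ≠ 0) (h : transvectant f g = 0) :
    ∃ (ℓ : MvPolynomial (Fin 2) K) (c₁ c₂ : K),
      ℓ.IsHomogeneous 1 ∧ c₁ ≠ 0 ∧ c₂ ≠ 0 ∧
      f = c₁ • ℓ ^ m ∧ g = c₂ • ℓ ^ n := by
  rw [← one_mul m] at hf
  rw [← one_mul n] at hg
  exact transvectant_eq_zero_coprime_degrees_general hmn hf hg hf0 hg0 <| by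
    simp [Fin.forall_fin_two, sub_eq_zero.1 h]
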